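/- arXiv:1803.08304 — 2 statements merged into one kernel-verified Lean document; each statement's English description precedes it below -/
import Mathlib

section
/- Let A and B be two finite persistence barcodes with positive total lengths and 1 ≤ p ≤ ∞. Let ψ(A) = {[0, ℓ_i^a/L_a]}_{i=1}^{n_a} and ψ(B) = {[0, ℓ_i^b/L_b]}_{i=1}^{n_b} be their normalized projections. Then d_p(ψ(A), ψ(B)) ≤ 4 · n_max^{1 − 1/p} · d_p(A, B) / L_max = 2 · r_p(A, B). -/
open Finset

/-- A finite persistence barcode with `n` intervals is given by endpoint functions
`x y : Fin n → ℝ` with `x i ≤ y i` (zero-length intervals serve as padding).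
`pcost` is the cost of matching interval `i` of `(xa, ya)` with interval `γ i` of `(xb, yb)`. -/
noncomputable def pcost {n : ℕ} (xa ya xb yb : Fin n → ℝ) (γ : Equiv.Perm (Fin n)) (i : Fin n) : ℝ :=
  max |xa i - xb (γ i)| |ya i - yb (γ i)|

/-- `p`-th Wasserstein distance between barcodes with `n` intervals each:
`d_p(A,B) = min_γ (Σ_i max{|x_i^a − x_{γ(i)}^b|, |y_i^a − y_{γ(i)}^b|}^p)^(1/p)`. -/
noncomputable def dW {n : ℕ} (p : ℝ) (xa ya xb yb : Fin n → ℝ) : ℝ :=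
  (Finset.univ : Finset (Equiv.Perm (Fin n))).inf' Finset.univ_nonempty
    (fun γ => (∑ i, (pcost xa ya xb yb γ i) ^ p) ^ (1 / p))

/-- Bottleneck distance `d_∞(A,B) = min_γ max_i max{|x_i^a − x_{γ(i)}^b|, |y_i^a − y_{γ(i)}^b|}`. -/
noncomputable def dInf {n : ℕ} (xa ya xb yb : Fin n → ℝ) : ℝ :=
  (Finset.univ : Finset (Equiv.Perm (Fin n))).inf' Finset.univ_nonempty
    (fun γ => ⨆ i, pcost xa ya xb yb γ i)

/-- Total length `L_a = Σ_i (y_i − x_i)` of a barcode. -/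
noncomputable def lenSum {n : ℕ} (x y : Fin n → ℝ) : ℝ := ∑ i, (y i - x i)

theorem aux_pcost_nonneg {n : ℕ} (xa ya xb yb : Fin n → ℝ) (γ : Equiv.Perm (Fin n)) (i : Fin n) :
    0 ≤ pcost xa ya xb yb γ i := le_trans (abs_nonneg _) (le_max_left _ _)

theorem aux_term {u v La Lb c S : ℝ} (hLa : 0 < La) (hv : 0 ≤ v) (hLb : 0 < Lb)
    (huv : |u - v| ≤ 2 * c) (hL : |La - Lb| ≤ 2 * S) :
    |u / La - v / Lb| ≤ (2 * c + 2 * S * (v / Lb)) / La := by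
  have h : u / La - v / Lb = ((u - v) - (La - Lb) * (v / Lb)) / La := by
    field_simp
    ring
  rw [h, abs_div, abs_of_pos hLa]
  gcongr
  have hq : 0 ≤ v / Lb := by positivity
  calc |(u - v) - (La - Lb) * (v / Lb)| ≤ |u - v| + |(La - Lb) * (v / Lb)| := abs_sub _ _
    _ = |u - v| + |La - Lb| * (v / Lb) := by rw [abs_mul, abs_of_nonneg hq]
    _ ≤ _ := by gcongr

theorem aux_main {n : ℕ} (xa ya xb yb : Fin n → ℝ)
    (hA : ∀ i, xa i ≤ ya i) (hB : ∀ i, xb i ≤ yb i)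
    (hLa : 0 < lenSum xa ya) (hLb : 0 < lenSum xb yb) (γ : Equiv.Perm (Fin n)) :
    ∃ q : Fin n → ℝ, (∀ i, 0 ≤ q i) ∧ ∑ i, q i = 1 ∧ ∀ i,
      pcost (fun _ => (0 : ℝ)) (fun i => (ya i - xa i) / lenSum xa ya)
          (fun _ => (0 : ℝ)) (fun i => (yb i - xb i) / lenSum xb yb) γ i ≤
      (2 * pcost xa ya xb yb γ i + 2 * (∑ j, pcost xa ya xb yb γ j) * q i) /
        max (lenSum xa ya) (lenSum xb yb) := by
  have hc : ∀ i, |(ya i - xa i) - (yb (γ i) - xb (γ i))| ≤ 2 * pcost xa ya xb yb γ i := by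
    intro i
    have h1 : |xa i - xb (γ i)| ≤ pcost xa ya xb yb γ i := le_max_left _ _
    have h2 : |ya i - yb (γ i)| ≤ pcost xa ya xb yb γ i := le_max_right _ _
    rw [abs_le] at *
    constructor <;> linarith [h1.1, h1.2, h2.1, h2.2]
  have hperm : lenSum xb yb = ∑ i, (yb (γ i) - xb (γ i)) :=
    (Equiv.sum_comp γ (fun i => yb i - xb i)).symm
  have hL : |lenSum xa ya - lenSum xb yb| ≤ 2 * ∑ j, pcost xa ya xb yb γ j := by
    rw [hperm, lenSum, ← Finset.sum_sub_distrib, Finset.mul_sum]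
    exact (Finset.abs_sum_le_sum_abs _ _).trans (Finset.sum_le_sum fun i _ => hc i)
  rcases le_total (lenSum xb yb) (lenSum xa ya) with h | h
  · refine ⟨fun i => (yb (γ i) - xb (γ i)) / lenSum xb yb, fun i => ?_, ?_, fun i => ?_⟩
    · exact div_nonneg (sub_nonneg.2 (hB _)) hLb.le
    · rw [← Finset.sum_div, ← hperm, div_self hLb.ne']
    · rw [max_eq_left h]
      have := aux_term hLa (sub_nonneg.2 (hB (γ i))) hLb (hc i) hL
      simpa [pcost] using this
  · refine ⟨fun i => (ya i - xa i) / lenSum xa ya, fun i => ?_, ?_, fun i => ?_⟩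
    · exact div_nonneg (sub_nonneg.2 (hA _)) hLa.le
    · rw [← Finset.sum_div, ← lenSum, div_self hLa.ne']
    · rw [max_eq_right h]
      have h1 := hc i
      rw [abs_sub_comm] at h1 hL
      have := aux_term hLb (sub_nonneg.2 (hA i)) hLa h1 hL
      rw [abs_sub_comm] at this
      simpa [pcost] using this

theorem aux_norm {n : ℕ} (hn : 1 ≤ n) (p : ℝ) (hp : 1 ≤ p) (c q w : Fin n → ℝ) (L : ℝ) (hL : 0 < L)
    (hc : ∀ i, 0 ≤ c i) (hq : ∀ i, 0 ≤ q i) (hq1 : ∑ i, q i = 1) (hw0 : ∀ i, 0 ≤ w i)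
    (hw : ∀ i, w i ≤ (2 * c i + 2 * (∑ j, c j) * q i) / L) :
    (∑ i, w i ^ p) ^ (1 / p) ≤ 4 * (n : ℝ) ^ (1 - 1 / p) * (∑ i, c i ^ p) ^ (1 / p) / L := by
  have hp0 : 0 < p := by linarith
  set S := ∑ j, c j with hS
  have hS0 : 0 ≤ S := Finset.sum_nonneg fun i _ => hc i
  have scale : ∀ (k : ℝ) (f : Fin n → ℝ), 0 ≤ k → (∀ i, 0 ≤ f i) →
      (∑ i, (k * f i) ^ p) ^ (1 / p) = k * (∑ i, f i ^ p) ^ (1 / p) := by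
    intro k f hk hf
    have : ∑ i, (k * f i) ^ p = k ^ p * ∑ i, f i ^ p := by
      rw [Finset.mul_sum]
      exact Finset.sum_congr rfl fun i _ => Real.mul_rpow hk (hf i)
    rw [this, Real.mul_rpow (by positivity)
      (Finset.sum_nonneg fun i _ => Real.rpow_nonneg (hf i) _), ← Real.rpow_mul hk,
      mul_one_div_cancel hp0.ne', Real.rpow_one]
  have hN0 : 0 ≤ (∑ i, c i ^ p) ^ (1 / p) :=
    Real.rpow_nonneg (Finset.sum_nonneg fun i _ => Real.rpow_nonneg (hc i) _) _
  have hqn : (∑ i, q i ^ p) ^ (1 / p) ≤ 1 := by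
    apply Real.rpow_le_one (Finset.sum_nonneg fun i _ => Real.rpow_nonneg (hq i) _) _ (by positivity)
    rw [← hq1]
    apply Finset.sum_le_sum
    intro i _
    have hi : q i ≤ 1 := by
      rw [← hq1]
      exact Finset.single_le_sum (f := q) (fun i _ => hq i) (Finset.mem_univ i)
    exact Real.rpow_le_self_of_le_one (hq i) hi hp
  have hSn : S ≤ (n : ℝ) ^ (1 - 1 / p) * (∑ i, c i ^ p) ^ (1 / p) := by
    have h := Real.rpow_sum_le_const_mul_sum_rpow (Finset.univ) c hp
    simp only [abs_of_nonneg (hc _), Finset.card_univ, Fintype.card_fin] at h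
    rw [← hS] at h
    have h2 := Real.rpow_le_rpow (Real.rpow_nonneg hS0 _) h (by positivity : 0 ≤ 1 / p)
    rw [Real.mul_rpow (by positivity)
      (Finset.sum_nonneg fun i _ => Real.rpow_nonneg (hc i) _), ← Real.rpow_mul hS0,
      mul_one_div_cancel hp0.ne', Real.rpow_one, ← Real.rpow_mul (by positivity)] at h2
    have e : (p - 1) * (1 / p) = 1 - 1 / p := by field_simp
    rwa [e] at h2
  have hn1 : 1 ≤ (n : ℝ) ^ (1 - 1 / p) := by
    apply Real.one_le_rpow (by exact_mod_cast hn)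
    rw [sub_nonneg, div_le_one hp0]
    exact hp
  calc (∑ i, w i ^ p) ^ (1 / p)
      ≤ (∑ i, (2 / L * c i + 2 * S / L * q i) ^ p) ^ (1 / p) := by
        apply Real.rpow_le_rpow (Finset.sum_nonneg fun i _ => Real.rpow_nonneg (hw0 i) _) _
          (by positivity)
        apply Finset.sum_le_sum
        intro i _
        apply Real.rpow_le_rpow (hw0 i) _ hp0.le
        refine (hw i).trans (le_of_eq ?_)
        ring
    _ ≤ (∑ i, (2 / L * c i) ^ p) ^ (1 / p) + (∑ i, (2 * S / L * q i) ^ p) ^ (1 / p) :=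
        Real.Lp_add_le_of_nonneg _ hp
          (fun i _ => mul_nonneg (by positivity) (hc i))
          (fun i _ => mul_nonneg (by positivity) (hq i))
    _ = 2 / L * (∑ i, c i ^ p) ^ (1 / p) + 2 * S / L * (∑ i, q i ^ p) ^ (1 / p) := by
        rw [scale _ _ (by positivity) hc, scale _ _ (by positivity) hq]
    _ ≤ 2 / L * ((n : ℝ) ^ (1 - 1 / p) * (∑ i, c i ^ p) ^ (1 / p))
          + 2 * ((n : ℝ) ^ (1 - 1 / p) * (∑ i, c i ^ p) ^ (1 / p)) / L * 1 := by
        gcongr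
        · exact le_mul_of_one_le_left hN0 hn1
        · exact Real.rpow_nonneg (Finset.sum_nonneg fun i _ => Real.rpow_nonneg (hq i) _) _
    _ = _ := by ring

/-- for the normalized projection `ψ(A) = {[0, ℓ_i^a/L_a]}`,
`d_p(ψ(A), ψ(B)) ≤ 4·n_max^(1−1/p)·d_p(A,B)/L_max  (= 2 r_p(A,B))` for `1 ≤ p < ∞`,
and `d_∞(ψ(A), ψ(B)) ≤ 4·n_max·d_∞(A,B)/L_max  (= 2 r_∞(A,B))` for `p = ∞`. -/
theorem projection_psi_inequality {n : ℕ} (xa ya xb yb : Fin n → ℝ)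
    (hA : ∀ i, xa i ≤ ya i) (hB : ∀ i, xb i ≤ yb i)
    (hLa : 0 < lenSum xa ya) (hLb : 0 < lenSum xb yb) :
    (∀ p : ℝ, 1 ≤ p →
      dW p (fun _ => (0 : ℝ)) (fun i => (ya i - xa i) / lenSum xa ya)
          (fun _ => (0 : ℝ)) (fun i => (yb i - xb i) / lenSum xb yb) ≤
        4 * (n : ℝ) ^ (1 - 1 / p) * dW p xa ya xb yb / max (lenSum xa ya) (lenSum xb yb)) ∧
    dInf (fun _ => (0 : ℝ)) (fun i => (ya i - xa i) / lenSum xa ya)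
        (fun _ => (0 : ℝ)) (fun i => (yb i - xb i) / lenSum xb yb) ≤
      4 * (n : ℝ) * dInf xa ya xb yb / max (lenSum xa ya) (lenSum xb yb) := by
  have hn : 1 ≤ n := by
    rcases Nat.eq_zero_or_pos n with h | h
    · subst h
      simp [lenSum] at hLa
    · exact h
  have hM : 0 < max (lenSum xa ya) (lenSum xb yb) := lt_max_of_lt_left hLa
  constructor
  · intro p hp
    obtain ⟨γ, -, hγ⟩ := Finset.exists_mem_eq_inf' (Finset.univ_nonempty)
      (fun γ : Equiv.Perm (Fin n) => (∑ i, (pcost xa ya xb yb γ i) ^ p) ^ (1 / p))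
    obtain ⟨q, hq, hq1, hb⟩ := aux_main xa ya xb yb hA hB hLa hLb γ
    have h2 : dW p xa ya xb yb = _ := hγ
    rw [h2]
    refine (Finset.inf'_le _ (Finset.mem_univ γ)).trans ?_
    exact aux_norm hn p hp _ q _ _ hM (fun i => aux_pcost_nonneg _ _ _ _ γ i) hq hq1
      (fun i => aux_pcost_nonneg _ _ _ _ γ i) hb
  · obtain ⟨γ, -, hγ⟩ := Finset.exists_mem_eq_inf' (Finset.univ_nonempty)
      (fun γ : Equiv.Perm (Fin n) => ⨆ i, pcost xa ya xb yb γ i)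
    obtain ⟨q, hq, hq1, hb⟩ := aux_main xa ya xb yb hA hB hLa hLb γ
    have h2 : dInf xa ya xb yb = _ := hγ
    rw [h2]
    refine (Finset.inf'_le _ (Finset.mem_univ γ)).trans ?_
    have : Nonempty (Fin n) := ⟨⟨0, hn⟩⟩
    apply ciSup_le
    intro i
    refine (hb i).trans ?_
    set C := ⨆ i, pcost xa ya xb yb γ i with hC
    have hle : ∀ i, pcost xa ya xb yb γ i ≤ C := fun i =>
      le_ciSup (f := fun i => pcost xa ya xb yb γ i) (Set.finite_range _).bddAbove i
    have hC0 : 0 ≤ C := (aux_pcost_nonneg _ _ _ _ γ i).trans (hle i)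
    have hS : ∑ j, pcost xa ya xb yb γ j ≤ n * C := by
      refine (Finset.sum_le_sum fun j _ => hle j).trans ?_
      simp
    have hi : q i ≤ 1 := by
      rw [← hq1]
      exact Finset.single_le_sum (f := q) (fun i _ => hq i) (Finset.mem_univ i)
    have hn' : (1 : ℝ) ≤ n := by exact_mod_cast hn
    have h3 : C ≤ n * C := le_mul_of_one_le_left hC0 hn'
    have h4 : (∑ j, pcost xa ya xb yb γ j) * q i ≤ n * C * 1 :=
      mul_le_mul hS hi (hq i) (by positivity)
    gcongr
    nlinarith [hle i]
end

section
/- (Stability of persistent entropy.) Let A and B be two finite persistence barcodes with positive total lengths and let 1 ≤ p ≤ ∞. If the relative error r_p(A, B) = 2 n_max^{1 − 1/p} d_p(A, B) / L_max is less than 1/4, then |E(A) − E(B)| ≤ 2 r_p(A,B) · [ log(n_max) − log( 2 r_p(A,B) ) ]. -/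
open Finset

/-- Persistent entropy `E(A) = −Σ_i (ℓ_i/L) log(ℓ_i/L)` (note `Real.log 0 = 0`,
which realizes the convention `0·log 0 = 0`). -/
noncomputable def pentropy {n : ℕ} (x y : Fin n → ℝ) : ℝ :=
  -∑ i, ((y i - x i) / lenSum x y) * Real.log ((y i - x i) / lenSum x y)

theorem aux_half {v : ℝ} (h0 : 0 ≤ v) (h1 : v ≤ 1/2) : Real.negMulLog (1 - v) ≤ Real.negMulLog v := by
  rcases h0.eq_or_lt with rfl | h0
  · simp
  rcases h1.eq_or_lt with rfl | h1
  · norm_num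
  have h := strictConcaveOn_log_Ioi.concaveOn.slope_anti_adjacent (x := v) (y := 1 - v) (z := 1)
    (Set.mem_Ioi.2 h0) (Set.mem_Ioi.2 one_pos) (by linarith) (by linarith)
  rw [Real.log_one, div_le_div_iff₀ (by linarith) (by linarith)] at h
  unfold Real.negMulLog
  nlinarith

theorem aux_conc {x v : ℝ} (hx : 0 ≤ x) (h0 : 0 ≤ v) (h1 : x + v ≤ 1) :
    Real.negMulLog x ≤ Real.negMulLog (x + v) + Real.negMulLog (1 - v) := by
  rcases (show x ≤ 1 by linarith).eq_or_lt with rfl | hx1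
  · have : v = 0 := by linarith
    subst this; simp
  have hd : 0 < 1 - x := by linarith
  have hl0 : 0 ≤ v / (1 - x) := by positivity
  have hl1 : 0 ≤ 1 - v / (1 - x) := by
    rw [sub_nonneg, div_le_one hd]; linarith
  have a := Real.concaveOn_negMulLog.2 (Set.mem_Ici.2 hx) (Set.mem_Ici.2 zero_le_one) hl1 hl0 (by ring)
  have b := Real.concaveOn_negMulLog.2 (Set.mem_Ici.2 hx) (Set.mem_Ici.2 zero_le_one) hl0 hl1 (by ring)
  simp only [smul_eq_mul, Real.negMulLog_one, mul_zero, add_zero, mul_one] at a b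
  have e1 : (1 - v / (1 - x)) * x + v / (1 - x) = x + v := by field_simp; ring
  have e2 : v / (1 - x) * x + (1 - v / (1 - x)) = 1 - v := by field_simp; ring
  rw [e1] at a
  rw [e2] at b
  linarith

theorem aux_sub {x v : ℝ} (hx : 0 ≤ x) (h0 : 0 ≤ v) :
    Real.negMulLog (x + v) ≤ Real.negMulLog x + Real.negMulLog v := by
  rcases hx.eq_or_lt with rfl | hx
  · simp
  rcases h0.eq_or_lt with rfl | h0
  · simp
  have a := Real.log_le_log hx (show x ≤ x + v by linarith)
  have b := Real.log_le_log h0 (show v ≤ x + v by linarith)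
  unfold Real.negMulLog
  nlinarith [mul_le_mul_of_nonneg_left a hx.le, mul_le_mul_of_nonneg_left b h0.le]

theorem aux_abs {x y : ℝ} (hx : 0 ≤ x) (hy : 0 ≤ y) (hx1 : x ≤ 1) (hy1 : y ≤ 1)
    (h : |x - y| ≤ 1 / 2) :
    |Real.negMulLog x - Real.negMulLog y| ≤ Real.negMulLog |x - y| := by
  wlog hxy : x ≤ y generalizing x y
  · rw [abs_sub_comm, abs_sub_comm x y]
    rw [abs_sub_comm] at h
    exact this hy hx hy1 hx1 h (le_of_not_ge hxy)
  obtain ⟨v, rfl⟩ : ∃ v, y = x + v := ⟨y - x, by ring⟩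
  have h0 : 0 ≤ v := by linarith
  have e : |x - (x + v)| = v := by rw [sub_add_cancel_left, abs_neg, abs_of_nonneg h0]
  rw [e] at h ⊢
  have a := aux_half h0 h
  have b := aux_conc hx h0 hy1
  have c := aux_sub hx h0
  rw [abs_le]; constructor <;> linarith

theorem aux_tan {v t : ℝ} (hv : 0 ≤ v) (ht : 0 < t) :
    Real.negMulLog v ≤ v * (-Real.log t) + t - v := by
  rcases hv.eq_or_lt with rfl | hv
  · simp [ht.le]
  have a := Real.log_le_sub_one_of_pos (div_pos ht hv)
  rw [Real.log_div ht.ne' hv.ne'] at a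
  have b := mul_le_mul_of_nonneg_left a hv.le
  have c : v * (t / v - 1) = t - v := by field_simp
  unfold Real.negMulLog
  rw [c] at b
  linarith

/-- Continuity estimate for the entropy of finite distributions. -/
theorem aux_entropy {n : ℕ} (a b : Fin n → ℝ) (ha : ∀ i, 0 ≤ a i) (hb : ∀ i, 0 ≤ b i)
    (sa : ∑ i, a i = 1) (sb : ∑ i, b i = 1) (s : ℝ) (hs : s < 1 / 2)
    (hab : ∑ i, |a i - b i| ≤ s) :
    |∑ i, Real.negMulLog (a i) - ∑ i, Real.negMulLog (b i)| ≤ s * (Real.log n - Real.log s) := by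
  have hs0 : 0 ≤ s := le_trans (Finset.sum_nonneg fun i _ => abs_nonneg _) hab
  have hle : ∀ i, |a i - b i| ≤ s := fun i =>
    (Finset.single_le_sum (f := fun i => |a i - b i|) (fun i _ => abs_nonneg _)
      (Finset.mem_univ i)).trans hab
  rcases hs0.eq_or_lt with h0 | h0
  · have : a = b := by
      funext i
      have := hle i
      rw [← h0] at this
      exact sub_eq_zero.1 (abs_nonpos_iff.1 this)
    subst this
    simp [← h0]
  rcases Nat.lt_or_ge n 2 with hn | hn
  · interval_cases n
    · simp at sa
    · simp at sa sb
      simp [sa, sb]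
      have := Real.log_nonpos h0.le (by linarith)
      nlinarith
  have a1 : ∀ i, a i ≤ 1 := fun i => sa ▸ Finset.single_le_sum (fun i _ => ha i) (Finset.mem_univ i)
  have b1 : ∀ i, b i ≤ 1 := fun i => sb ▸ Finset.single_le_sum (fun i _ => hb i) (Finset.mem_univ i)
  have hn' : (2 : ℝ) ≤ n := by exact_mod_cast hn
  have hn0 : (0 : ℝ) < n := by linarith
  have hlog : 1 ≤ Real.log n - Real.log s := by
    rw [← Real.log_div hn0.ne' h0.ne', Real.le_log_iff_exp_le (by positivity), le_div_iff₀ h0]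
    have := Real.exp_one_lt_d9
    nlinarith [Real.exp_pos 1]
  calc |∑ i, Real.negMulLog (a i) - ∑ i, Real.negMulLog (b i)|
      ≤ ∑ i, |Real.negMulLog (a i) - Real.negMulLog (b i)| := by
        rw [← Finset.sum_sub_distrib]; exact Finset.abs_sum_le_sum_abs _ _
    _ ≤ ∑ i, (|a i - b i| * (-Real.log (s / n)) + s / n - |a i - b i|) := by
        refine Finset.sum_le_sum fun i _ => ?_
        exact (aux_abs (ha i) (hb i) (a1 i) (b1 i) ((hle i).trans hs.le)).trans
          (aux_tan (abs_nonneg _) (by positivity))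
    _ = (∑ i, |a i - b i|) * (Real.log n - Real.log s) + s - ∑ i, |a i - b i| := by
        rw [Finset.sum_sub_distrib, Finset.sum_add_distrib, ← Finset.sum_mul,
          Real.log_div h0.ne' hn0.ne']
        simp
        field_simp
    _ ≤ s * (Real.log n - Real.log s) := by nlinarith

/-- Normalising two nonnegative vectors. -/
theorem aux_norm_s9 {n : ℕ} (a b : Fin n → ℝ) (hb : ∀ i, 0 ≤ b i)
    (A B d : ℝ) (hA : ∑ i, a i = A) (hB : ∑ i, b i = B) (pA : 0 < A) (pB : 0 < B)
    (hd : ∑ i, |a i - b i| ≤ d) :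
    ∑ i, |a i / A - b i / B| ≤ 2 * (d / A) := by
  have h1 : |B - A| ≤ d := by
    rw [abs_sub_comm, ← hA, ← hB, ← Finset.sum_sub_distrib]
    exact (Finset.abs_sum_le_sum_abs _ _).trans hd
  calc ∑ i, |a i / A - b i / B| ≤ ∑ i, (|a i - b i| / A + b i * (|B - A| / (A * B))) := by
        refine Finset.sum_le_sum fun i _ => ?_
        have : a i / A - b i / B = (a i - b i) / A + b i * ((B - A) / (A * B)) := by
          field_simp; ring
        rw [this]
        refine (abs_add_le _ _).trans (le_of_eq ?_)
        rw [abs_div, abs_mul, abs_div, abs_of_pos pA, abs_of_nonneg (hb i),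
          abs_of_pos (mul_pos pA pB)]
    _ = (∑ i, |a i - b i|) / A + |B - A| / A := by
        rw [Finset.sum_add_distrib, ← Finset.sum_mul, ← Finset.sum_div, hB]
        field_simp
    _ ≤ d / A + d / A := by gcongr
    _ = _ := by ring

theorem aux_core {n : ℕ} (xa ya xb yb : Fin n → ℝ)
    (hA : ∀ i, xa i ≤ ya i) (hB : ∀ i, xb i ≤ yb i)
    (hLa : 0 < lenSum xa ya) (hLb : 0 < lenSum xb yb) (γ : Equiv.Perm (Fin n)) (D r : ℝ)
    (hD : ∑ i, pcost xa ya xb yb γ i ≤ D)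
    (hr : r = 2 * D / max (lenSum xa ya) (lenSum xb yb)) (hr4 : r < 1 / 4) :
    |pentropy xa ya - pentropy xb yb| ≤ 2 * r * (Real.log n - Real.log (2 * r)) := by
  have hd : ∑ i, |(ya i - xa i) - (yb (γ i) - xb (γ i))| ≤ 2 * D := by
    refine le_trans ?_ (mul_le_mul_of_nonneg_left hD zero_le_two)
    rw [Finset.mul_sum]
    refine Finset.sum_le_sum fun i _ => ?_
    have e : (ya i - xa i) - (yb (γ i) - xb (γ i)) = (ya i - yb (γ i)) - (xa i - xb (γ i)) := by ring
    rw [e]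
    have h1 := abs_sub (ya i - yb (γ i)) (xa i - xb (γ i))
    have h2 : |xa i - xb (γ i)| ≤ pcost xa ya xb yb γ i := le_max_left _ _
    have h3 : |ya i - yb (γ i)| ≤ pcost xa ya xb yb γ i := le_max_right _ _
    linarith
  have sB : ∑ i, (yb (γ i) - xb (γ i)) = lenSum xb yb :=
    Equiv.sum_comp γ (fun i => yb i - xb i)
  have key : ∑ i, |(ya i - xa i) / lenSum xa ya - (yb (γ i) - xb (γ i)) / lenSum xb yb| ≤ 2 * r := by
    rw [hr]
    rcases le_total (lenSum xb yb) (lenSum xa ya) with h | h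
    · rw [max_eq_left h]
      exact aux_norm_s9 _ _ (fun i => sub_nonneg.2 (hB _)) _ _ _ rfl sB hLa hLb hd
    · rw [max_eq_right h]
      refine le_trans (le_of_eq (Finset.sum_congr rfl fun i _ => abs_sub_comm _ _)) ?_
      refine aux_norm_s9 _ _ (fun i => sub_nonneg.2 (hA _)) _ _ _ sB rfl hLb hLa ?_
      exact le_trans (le_of_eq (Finset.sum_congr rfl fun i _ => abs_sub_comm _ _)) hd
  have E := aux_entropy (fun i => (ya i - xa i) / lenSum xa ya)
    (fun i => (yb (γ i) - xb (γ i)) / lenSum xb yb)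
    (fun i => div_nonneg (sub_nonneg.2 (hA _)) hLa.le)
    (fun i => div_nonneg (sub_nonneg.2 (hB _)) hLb.le)
    (by rw [← Finset.sum_div]; exact div_self hLa.ne')
    (by rw [← Finset.sum_div, sB]; exact div_self hLb.ne') (2 * r) (by linarith) key
  have e1 : pentropy xa ya = ∑ i, Real.negMulLog ((ya i - xa i) / lenSum xa ya) := by
    simp [pentropy, Real.negMulLog]
  have e2 : pentropy xb yb = ∑ i, Real.negMulLog ((yb (γ i) - xb (γ i)) / lenSum xb yb) := by
    rw [Equiv.sum_comp γ (fun i => Real.negMulLog ((yb i - xb i) / lenSum xb yb))]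
    simp [pentropy, Real.negMulLog]
  rw [e1, e2]
  exact E

theorem aux_holder {n : ℕ} (c : Fin n → ℝ) (hc : ∀ i, 0 ≤ c i) (p : ℝ) (hp : 1 ≤ p) :
    ∑ i, c i ≤ (n : ℝ) ^ (1 - 1 / p) * (∑ i, c i ^ p) ^ (1 / p) := by
  have p0 : 0 < p := by linarith
  have h := Real.rpow_sum_le_const_mul_sum_rpow (Finset.univ) c hp
  simp only [abs_of_nonneg (hc _), Finset.card_univ, Fintype.card_fin] at h
  have s0 : 0 ≤ ∑ i, c i := Finset.sum_nonneg fun i _ => hc i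
  have t0 : 0 ≤ ∑ i, c i ^ p := Finset.sum_nonneg fun i _ => Real.rpow_nonneg (hc i) _
  have h2 := Real.rpow_le_rpow (Real.rpow_nonneg s0 _) h (one_div_nonneg.2 p0.le)
  rw [← Real.rpow_mul s0, Real.mul_rpow (by positivity) t0, ← Real.rpow_mul (by positivity)] at h2
  have e1 : p * (1 / p) = 1 := by field_simp
  have e2 : (p - 1) * (1 / p) = 1 - 1 / p := by field_simp
  rwa [e1, e2, Real.rpow_one] at h2

/-- Stability of persistent entropy: if the relative error
`r_p(A,B) = 2·n_max^(1−1/p)·d_p(A,B)/L_max` is less than `1/4` then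
`|E(A) − E(B)| ≤ 2 r_p(A,B)·[log(n_max) − log(2 r_p(A,B))]`; for `p = ∞` read
`n_max^(1−1/p) = n_max`.  (When `r_p = 0`, both `Real.log 0 = 0` and the bound is `0`.) -/
theorem pentropy_stability {n : ℕ} (xa ya xb yb : Fin n → ℝ)
    (hA : ∀ i, xa i ≤ ya i) (hB : ∀ i, xb i ≤ yb i)
    (hLa : 0 < lenSum xa ya) (hLb : 0 < lenSum xb yb) :
    (∀ p : ℝ, 1 ≤ p → ∀ r : ℝ,
      r = 2 * (n : ℝ) ^ (1 - 1 / p) * dW p xa ya xb yb / max (lenSum xa ya) (lenSum xb yb) →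
      r < 1 / 4 →
      |pentropy xa ya - pentropy xb yb| ≤ 2 * r * (Real.log n - Real.log (2 * r))) ∧
    (∀ r : ℝ,
      r = 2 * (n : ℝ) * dInf xa ya xb yb / max (lenSum xa ya) (lenSum xb yb) →
      r < 1 / 4 →
      |pentropy xa ya - pentropy xb yb| ≤ 2 * r * (Real.log n - Real.log (2 * r))) := by
  have pc : ∀ γ i, 0 ≤ pcost xa ya xb yb γ i := fun γ i => (abs_nonneg _).trans (le_max_left _ _)
  constructor
  · intro p hp r hr hr4
    obtain ⟨γ, -, hγ⟩ := Finset.exists_mem_eq_inf' (Finset.univ_nonempty)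
      (fun γ : Equiv.Perm (Fin n) => (∑ i, (pcost xa ya xb yb γ i) ^ p) ^ (1 / p))
    refine aux_core xa ya xb yb hA hB hLa hLb γ _ r (aux_holder _ (pc γ) p hp) ?_ hr4
    rw [hr, dW, hγ, mul_assoc]
  · intro r hr hr4
    obtain ⟨γ, -, hγ⟩ := Finset.exists_mem_eq_inf' (Finset.univ_nonempty)
      (fun γ : Equiv.Perm (Fin n) => ⨆ i, pcost xa ya xb yb γ i)
    refine aux_core xa ya xb yb hA hB hLa hLb γ ((n : ℝ) * ⨆ i, pcost xa ya xb yb γ i) r ?_ ?_ hr4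
    · refine (Finset.sum_le_sum fun i _ => le_ciSup (Set.finite_range _).bddAbove i).trans ?_
      simp
    · rw [hr, dInf, hγ, mul_assoc]
end
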